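/- Strict admissibility of initial values in G ∪ N (Theorem 5.1): Assume additionally b̃ ≥ m. Let α ∈ G ∪ N, let u be the corresponding solution, and let w be the solution of the linearized equation w''(τ) + coth(τ)·w'(τ) + f'(u(τ))·w(τ) = 0 on (0,∞) with w(0) = 1 and lim_{τ→0+} w'(τ) = 0, where f'(s) = ã(1+2/m)s^{2/m} − b̃. Then w has exactly one zero in (0, b(α)); moreover if α ∈ N then w(b(α)) < 0, while if α ∈ G then w is unbounded on (0, ∞). -/

import Mathlib

open Set Filter

/-!
Write `f` for the nonlinearity. Superlinearity, `f s < s f'(s)`, makes `w` oscillate faster than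
`u`: the weighted Wronskian of `w` and `u` is increasing while both are positive, so `w` has a first
zero `c`, before the first zero of `u`, and it crosses `0` there.

After `c`, compare `w` with the dilation `v = sinh · u' + β u`, where `β > 0` is chosen so that
`v(c) = 0`. It satisfies `v'' + coth · v' + f'(u) v = G` with
`G = β (u f'(u) - f(u)) - 2 cosh · f(u)`, and the condition `b̃ ≥ m` makes `G` change sign at most
once, from negative to positive. Were `G` still nonpositive at some time after `c`, it would be
negative on all of `(0, c)`, so that the Wronskian of `v` and `w` could not vanish at `c`; hence
`G > 0` from `c` on. The energy of `u` gives `u' < 0` and `v ≤ 0` after `c`. So the Wronskian of `v`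
and `w`, which is `0` at `c`, increases as long as `w < 0`, and this is incompatible with a second
zero of `w`. For a ground state, a bounded `w` would decay like `exp (-l t)` with `l > 1`, as `u`
does, and then the Wronskian would tend to `0` instead of increasing from `0`.
-/

open Real Topology

lemma lt_of_tendsto_nhdsGT_of_hasDerivAt_pos {g g' : ℝ → ℝ} {c T L : ℝ} (hcT : c < T)
    (hg : ∀ t ∈ Ioc c T, HasDerivAt g (g' t) t) (hg' : ∀ t ∈ Ioo c T, 0 < g' t)
    (hL : Tendsto g (𝓝[>] c) (𝓝 L)) : L < g T := by
  have hmono : StrictMonoOn g (Ioc c T) :=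
    strictMonoOn_of_hasDerivWithinAt_pos (convex_Ioc c T) (HasDerivAt.continuousOn hg)
      (fun t ht => (hg t (interior_subset ht)).hasDerivWithinAt)
      (fun t ht => hg' t (interior_Ioc (a := c) ▸ ht))
  obtain ⟨s, hcs, hsT⟩ := exists_between hcT
  have hLs : L ≤ g s := le_of_tendsto hL <| by
    filter_upwards [Ioo_mem_nhdsGT hcs] with t ht
    exact (hmono ⟨ht.1, ht.2.le.trans hsT.le⟩ ⟨hcs, hsT.le⟩ ht.2).le
  exact hLs.trans_lt (hmono ⟨hcs, hsT.le⟩ ⟨hcT, le_rfl⟩ hsT)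

lemma exists_first_zero {g : ℝ → ℝ} {c T : ℝ} (hcT : c < T) (hg : ContinuousOn g (Ioc c T))
    (hpos : ∀ᶠ t in 𝓝[>] c, 0 < g t) (hT : g T ≤ 0) :
    ∃ d ∈ Ioc c T, g d = 0 ∧ ∀ t ∈ Ioo c d, 0 < g t := by
  obtain ⟨e, hce, he⟩ := mem_nhdsGT_iff_exists_Ioo_subset.1 hpos
  obtain ⟨s, hcs, hs⟩ := exists_between (lt_min hce hcT)
  have hgs : 0 < g s := he ⟨hcs, hs.trans_le (min_le_left _ _)⟩
  have hg' : ContinuousOn g (Icc s T) := hg.mono (Icc_subset_Ioc hcs le_rfl)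
  have hsT : s ≤ T := (hs.trans_le (min_le_right _ _)).le
  have hcompact : IsCompact (Icc s T ∩ g ⁻¹' Iic 0) :=
    isCompact_Icc.of_isClosed_subset (hg'.preimage_isClosed_of_isClosed isClosed_Icc isClosed_Iic)
      inter_subset_left
  obtain ⟨d, ⟨hd, hgd⟩, hmin⟩ := hcompact.exists_isLeast ⟨T, ⟨hsT, le_rfl⟩, hT⟩
  have hbefore : ∀ t ∈ Ioo c d, 0 < g t := by
    intro t ht
    rcases lt_or_ge t s with hts | hst
    · exact he ⟨ht.1, hts.trans (hs.trans_le (min_le_left _ _))⟩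
    · by_contra! h
      exact (hmin ⟨⟨hst, ht.2.le.trans hd.2⟩, h⟩).not_gt ht.2
  obtain ⟨t, ht, hgt⟩ :=
    intermediate_value_Icc' hd.1 (hg'.mono (Icc_subset_Icc_right hd.2)) ⟨hgd, hgs.le⟩
  have htd : t = d := le_antisymm ht.2 (hmin ⟨⟨ht.1, ht.2.trans hd.2⟩, hgt.le⟩)
  exact ⟨d, ⟨hcs.trans_le hd.1, hd.2⟩, htd ▸ hgt, hbefore⟩

lemma eventually_neg_of_hasDerivAt_neg {g : ℝ → ℝ} {c d : ℝ} (hg : HasDerivAt g d c) (hd : d < 0)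
    (hgc : g c = 0) : ∀ᶠ t in 𝓝[>] c, g t < 0 := by
  filter_upwards [nhdsWithin_le_nhds
    (eventually_nhdsWithin_sign_eq_of_deriv_neg (hg.deriv.trans_lt hd) hgc), self_mem_nhdsWithin]
    with t hsign (ht : c < t)
  rwa [sign_neg (sub_neg.2 ht), sign_eq_neg_one_iff] at hsign

lemma eventually_pos_of_hasDerivAt_neg {g : ℝ → ℝ} {c d : ℝ} (hg : HasDerivAt g d c) (hd : d < 0)
    (hgc : g c = 0) : ∀ᶠ t in 𝓝[<] c, 0 < g t := by
  filter_upwards [nhdsWithin_le_nhds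
    (eventually_nhdsWithin_sign_eq_of_deriv_neg (hg.deriv.trans_lt hd) hgc), self_mem_nhdsWithin]
    with t hsign (ht : t < c)
  rwa [sign_pos (sub_pos.2 ht), sign_eq_one_iff] at hsign

lemma neg_of_hasDerivAt_neg_at_zeros {g g' : ℝ → ℝ} {c T : ℝ}
    (hg : ∀ t ∈ Ioc c T, HasDerivAt g (g' t) t) (hneg : ∀ᶠ t in 𝓝[>] c, g t < 0)
    (hzero : ∀ d ∈ Ioc c T, g d = 0 → (∀ t ∈ Ioo c d, g t < 0) → g' d < 0) :
    ∀ t ∈ Ioc c T, g t < 0 := by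
  intro t ht
  by_contra! h
  have hcont : ContinuousOn (-g) (Ioc c t) :=
    (HasDerivAt.continuousOn hg).neg.mono (Ioc_subset_Ioc_right ht.2)
  obtain ⟨d, hd, hgd, hbefore⟩ := exists_first_zero ht.1 hcont
    (hneg.mono fun _ => neg_pos.2) (neg_nonpos.2 h)
  have hdT : d ∈ Ioc c T := ⟨hd.1, hd.2.trans ht.2⟩
  have hgd : g d = 0 := neg_eq_zero.1 hgd
  have hbefore : ∀ t ∈ Ioo c d, g t < 0 := fun t ht => neg_pos.1 (hbefore t ht)
  obtain ⟨s, hpos, hs⟩ := ((eventually_pos_of_hasDerivAt_neg (hg d hdT)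
    (hzero d hdT hgd hbefore) hgd).and (Ioo_mem_nhdsLT hd.1)).exists
  exact (hbefore s hs).not_gt hpos

lemma existsUnique_zero_of_ne_zero {ι R : Type*} [LinearOrder ι] [Zero R] {g : ι → R} {J : Set ι}
    {c : ι} (hc : c ∈ J) (hgc : g c = 0) (hleft : ∀ t ∈ J, t < c → g t ≠ 0)
    (hright : ∀ t ∈ J, c < t → g t ≠ 0) : ∃! t, t ∈ J ∧ g t = 0 := by
  refine ⟨c, ⟨hc, hgc⟩, fun t ⟨ht, hgt⟩ => ?_⟩
  rcases lt_trichotomy t c with h | h | h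
  · exact absurd hgt (hleft t ht h)
  · exact h
  · exact absurd hgt (hright t ht h)

lemma nonneg_of_continuousAt_of_nonneg_Ioo {g : ℝ → ℝ} {c T : ℝ} (hcT : c < T)
    (hg : ContinuousAt g T) (hnonneg : ∀ t ∈ Ioo c T, 0 ≤ g t) : 0 ≤ g T :=
  ge_of_tendsto (hg.tendsto.mono_left nhdsWithin_le_nhds)
    (eventually_of_mem (Ioo_mem_nhdsLT hcT) hnonneg)

lemma tendsto_atTop_of_le_hasDerivAt {g g' : ℝ → ℝ} {T k : ℝ} (hk : 0 < k)
    (hg : ∀ t ≥ T, HasDerivAt g (g' t) t) (hg' : ∀ t ≥ T, k ≤ g' t) : Tendsto g atTop atTop := by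
  have hderiv : ∀ t ∈ Ici T, HasDerivAt (fun t => g t - k * t) (g' t - k * 1) t := fun t ht =>
    (hg t ht).sub ((hasDerivAt_id t).const_mul k)
  have hmono : MonotoneOn (fun t => g t - k * t) (Ici T) :=
    monotoneOn_of_hasDerivWithinAt_nonneg (convex_Ici T) (HasDerivAt.continuousOn hderiv)
      (fun t ht => (hderiv t (interior_subset ht)).hasDerivWithinAt)
      (fun t ht => by linarith [hg' t (interior_subset ht)])
  refine tendsto_atTop_mono' atTop ?_
    (tendsto_atTop_add_const_left atTop (g T - k * T) (tendsto_id.const_mul_atTop hk))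
  filter_upwards [eventually_ge_atTop T] with t ht
  have hgt : g T - k * T ≤ g t - k * t := hmono self_mem_Ici ht ht
  exact le_sub_iff_add_le.1 hgt

lemma sinh_le_exp (t : ℝ) : sinh t ≤ exp t := by
  rw [sinh_eq]
  linarith [exp_pos t, exp_pos (-t)]

/-- `y` (with derivative `y'`) solves `y'' + coth · y' + g = 0` on `(0, ∞)`, with `y(0⁺) = y₀` and
`y'(0⁺) = 0`: the radial form of `Δy + g = 0` on the hyperbolic plane, regular at the origin. The
forcing `g` is a function of the radius, so nonlinear and linearized equations are both covered. -/
structure IsRadialSolution (y₀ : ℝ) (y y' g : ℝ → ℝ) : Prop where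
  hasDerivAt : ∀ {t}, 0 < t → HasDerivAt y (y' t) t
  hasDerivAt_deriv : ∀ {t}, 0 < t → HasDerivAt y' (-(cosh t / sinh t * y' t) - g t) t
  tendsto_zero : Tendsto y (𝓝[>] 0) (𝓝 y₀)
  tendsto_deriv_zero : Tendsto y' (𝓝[>] 0) (𝓝 0)

/-- The Wronskian of `y` and `z`, weighted by `sinh`, which removes the first-order terms from its
derivative along radial solutions. -/
noncomputable def radialWronskian (y y' z z' : ℝ → ℝ) (t : ℝ) : ℝ :=
  sinh t * (y t * z' t - z t * y' t)

/-- The mechanical energy `y'² / 2 + P(y)` of a radial profile for the potential `P`. -/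
noncomputable def radialEnergy (P y y' : ℝ → ℝ) (t : ℝ) : ℝ :=
  y' t ^ 2 / 2 + P (y t)

lemma tendsto_sinh_nhdsGT_zero : Tendsto sinh (𝓝[>] 0) (𝓝 0) := by
  simpa using (continuous_sinh.tendsto 0).mono_left nhdsWithin_le_nhds

namespace IsRadialSolution

variable {y₀ z₀ : ℝ} {y y' z z' g h : ℝ → ℝ}

lemma of_deriv (hc : ContinuousOn y (Ici 0)) (hd : ∀ t ∈ Ioi (0 : ℝ), DifferentiableAt ℝ y t)
    (hd' : ∀ t ∈ Ioi (0 : ℝ), DifferentiableAt ℝ (deriv y) t)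
    (hode : ∀ t ∈ Ioi (0 : ℝ), deriv (deriv y) t + cosh t / sinh t * deriv y t + g t = 0)
    (h₀ : Tendsto (deriv y) (𝓝[>] 0) (𝓝 0)) : IsRadialSolution (y 0) y (deriv y) g where
  hasDerivAt ht := (hd _ ht).hasDerivAt
  hasDerivAt_deriv ht := (hd' _ ht).hasDerivAt.congr_deriv (by linarith [hode _ ht])
  tendsto_zero := (hc 0 self_mem_Ici).mono_left (nhdsWithin_mono 0 Ioi_subset_Ici_self)
  tendsto_deriv_zero := h₀

lemma neg (hy : IsRadialSolution y₀ y y' g) : IsRadialSolution (-y₀) (-y) (-y') (-g) where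
  hasDerivAt ht := (hy.hasDerivAt ht).neg
  hasDerivAt_deriv ht := (hy.hasDerivAt_deriv ht).neg.congr_deriv <| by
    simp only [Pi.neg_apply]
    ring
  tendsto_zero := hy.tendsto_zero.neg
  tendsto_deriv_zero := by
    have := hy.tendsto_deriv_zero.neg
    rwa [neg_zero] at this

lemma continuousOn (hy : IsRadialSolution y₀ y y' g) : ContinuousOn y (Ioi 0) :=
  HasDerivAt.continuousOn fun _ => hy.hasDerivAt

lemma hasDerivAt_sinh_mul_deriv (hy : IsRadialSolution y₀ y y' g) {t : ℝ} (ht : 0 < t) :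
    HasDerivAt (fun t => sinh t * y' t) (-(sinh t * g t)) t := by
  have := (sinh_pos_iff.2 ht).ne'
  refine ((hasDerivAt_sinh t).mul (hy.hasDerivAt_deriv ht)).congr_deriv ?_
  field_simp
  ring

lemma tendsto_sinh_mul_deriv (hy : IsRadialSolution y₀ y y' g) :
    Tendsto (fun t => sinh t * y' t) (𝓝[>] 0) (𝓝 0) := by
  simpa using tendsto_sinh_nhdsGT_zero.mul hy.tendsto_deriv_zero

lemma eventually_deriv_neg (hy : IsRadialSolution y₀ y y' g) (hg : ∀ᶠ t in 𝓝[>] 0, 0 < g t) :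
    ∀ᶠ t in 𝓝[>] 0, y' t < 0 := by
  obtain ⟨e, he, hge⟩ := mem_nhdsGT_iff_exists_Ioo_subset.1 hg
  filter_upwards [Ioo_mem_nhdsGT he] with t ht
  have hlt : 0 < -(sinh t * y' t) :=
    lt_of_tendsto_nhdsGT_of_hasDerivAt_pos (g := fun t => -(sinh t * y' t)) ht.1
      (fun s hs => (hy.hasDerivAt_sinh_mul_deriv hs.1).neg)
      (fun s hs => by
        rw [neg_neg]
        exact mul_pos (sinh_pos_iff.2 hs.1) (hge ⟨hs.1, hs.2.trans ht.2⟩))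
      (by simpa using hy.tendsto_sinh_mul_deriv.neg)
  exact neg_of_mul_neg_right (neg_pos.1 hlt) (sinh_pos_iff.2 ht.1).le

/-! ### Sturm comparison -/

lemma hasDerivAt_radialWronskian (hy : IsRadialSolution y₀ y y' g) (hz : IsRadialSolution z₀ z z' h)
    {t : ℝ} (ht : 0 < t) :
    HasDerivAt (radialWronskian y y' z z') (sinh t * (g t * z t - h t * y t)) t := by
  have := (sinh_pos_iff.2 ht).ne'
  refine ((hasDerivAt_sinh t).mul (((hy.hasDerivAt ht).mul (hz.hasDerivAt_deriv ht)).sub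
    ((hz.hasDerivAt ht).mul (hy.hasDerivAt_deriv ht)))).congr_deriv ?_
  simp only [Pi.sub_apply, Pi.mul_apply]
  field_simp
  ring

lemma tendsto_radialWronskian (hy : IsRadialSolution y₀ y y' g) (hz : IsRadialSolution z₀ z z' h) :
    Tendsto (radialWronskian y y' z z') (𝓝[>] 0) (𝓝 0) := by
  have := tendsto_sinh_nhdsGT_zero.mul ((hy.tendsto_zero.mul hz.tendsto_deriv_zero).sub
    (hz.tendsto_zero.mul hy.tendsto_deriv_zero))
  rwa [zero_mul] at this

lemma strictMonoOn_radialWronskian (hy : IsRadialSolution y₀ y y' g)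
    (hz : IsRadialSolution z₀ z z' h) {D : Set ℝ} (hD : Convex ℝ D) (hD₀ : D ⊆ Ioi 0)
    (hlt : ∀ t ∈ interior D, h t * y t < g t * z t) :
    StrictMonoOn (radialWronskian y y' z z') D :=
  have hderiv := fun t ht => hy.hasDerivAt_radialWronskian hz (hD₀ (a := t) ht)
  strictMonoOn_of_hasDerivWithinAt_pos hD (HasDerivAt.continuousOn hderiv)
    (fun t ht => (hderiv t (interior_subset ht)).hasDerivWithinAt)
    (fun t ht => mul_pos (sinh_pos_iff.2 (hD₀ (interior_subset ht))) (sub_pos.2 (hlt t ht)))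

lemma radialWronskian_pos (hy : IsRadialSolution y₀ y y' g) (hz : IsRadialSolution z₀ z z' h)
    {T : ℝ} (hT : 0 < T) (hlt : ∀ t ∈ Ioo 0 T, h t * y t < g t * z t) :
    0 < radialWronskian y y' z z' T :=
  lt_of_tendsto_nhdsGT_of_hasDerivAt_pos hT (fun _ ht => hy.hasDerivAt_radialWronskian hz ht.1)
    (fun t ht => mul_pos (sinh_pos_iff.2 ht.1) (sub_pos.2 (hlt t ht)))
    (hy.tendsto_radialWronskian hz)

/-! ### Exponential decay -/

lemma monotoneOn_add_mul_sinh_mul_exp (hy : IsRadialSolution y₀ y y' g) {T l : ℝ} (hT : 0 < T)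
    (hl : 0 ≤ l) (hpos : ∀ t ≥ T, 0 < y t) (hg : ∀ t ≥ T, l * (l - 1) * y t ≤ -g t) :
    MonotoneOn (fun t => (y' t + l * y t) * (sinh t * exp (-l * t))) (Ici T) := by
  have hderiv : ∀ t ∈ Ici T, HasDerivAt (fun t => (y' t + l * y t) * (sinh t * exp (-l * t)))
      ((l * (cosh t - sinh t) * y t + sinh t * (-g t - l * (l - 1) * y t)) * exp (-l * t)) t := by
    intro t ht
    have ht₀ : 0 < t := hT.trans_le ht
    have := (sinh_pos_iff.2 ht₀).ne'
    have hexp : HasDerivAt (fun t => exp (-l * t)) (exp (-l * t) * (-l * 1)) t :=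
      ((hasDerivAt_id t).const_mul (-l)).exp
    refine (((hy.hasDerivAt_deriv ht₀).add ((hy.hasDerivAt ht₀).const_mul l)).mul
      ((hasDerivAt_sinh t).mul hexp)).congr_deriv ?_
    simp only [Pi.add_apply, Pi.mul_apply]
    field_simp
    ring
  refine monotoneOn_of_hasDerivWithinAt_nonneg (convex_Ici T) (HasDerivAt.continuousOn hderiv)
    (fun t ht => (hderiv t (interior_subset ht)).hasDerivWithinAt) fun t ht => ?_
  have ht : T ≤ t := interior_subset ht
  have hcosh : 0 ≤ cosh t - sinh t := sub_nonneg.2 (sinh_lt_cosh t).le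
  have hsinh : 0 ≤ sinh t := sinh_nonneg_iff.2 (hT.le.trans ht)
  have hgap : 0 ≤ -g t - l * (l - 1) * y t := sub_nonneg.2 (hg t ht)
  have hyt : 0 < y t := hpos t ht
  positivity

lemma tendsto_deriv_atTop_of_neg_mul_lt (hy : IsRadialSolution y₀ y y' g) {T l M : ℝ} (hT : 0 < T)
    (hl : 1 < l) (hpos : ∀ t ≥ T, 0 < y t) (hM : ∀ t ≥ T, y t ≤ M)
    (hg : ∀ t ≥ T, l * (l - 1) * y t ≤ -g t) (hlt : -l * y T < y' T) :
    Tendsto y' atTop atTop := by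
  have hl₀ : 0 < l := one_pos.trans hl
  set k := (y' T + l * y T) * (sinh T * exp (-l * T))
  have hk : 0 < k := by
    have := sinh_pos_iff.2 hT
    have : 0 < y' T + l * y T := by linarith
    positivity
  have hgrowth : ∀ t ≥ T, k * exp ((l - 1) * t) - l * M ≤ y' t := by
    intro t ht
    have hkt : k ≤ (y' t + l * y t) * (sinh t * exp (-l * t)) :=
      hy.monotoneOn_add_mul_sinh_mul_exp hT hl₀.le hpos hg self_mem_Ici ht ht
    have hsinh : 0 < sinh t := sinh_pos_iff.2 (hT.trans_le ht)
    have hsum : 0 < y' t + l * y t := pos_of_mul_pos_left (hk.trans_le hkt) (by positivity)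
    have hexp : exp t * exp (-l * t) * exp ((l - 1) * t) = 1 := by
      rw [← exp_add, ← exp_add, exp_eq_one_iff]
      ring
    calc
      k * exp ((l - 1) * t) - l * M
        ≤ (y' t + l * y t) * (exp t * exp (-l * t)) * exp ((l - 1) * t) - l * y t := by
          gcongr
          · exact hkt.trans (by gcongr; exact sinh_le_exp t)
          · exact hM t ht
      _ = y' t := by rw [mul_assoc, hexp, mul_one, add_sub_cancel_right]
  refine tendsto_atTop_mono' atTop ((eventually_ge_atTop T).mono hgrowth) ?_
  exact tendsto_atTop_add_const_right _ _ ((tendsto_exp_atTop.comp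
    (tendsto_id.const_mul_atTop (sub_pos.2 hl))).const_mul_atTop hk)

lemma deriv_le_neg_mul_of_bounded (hy : IsRadialSolution y₀ y y' g) {T l M : ℝ} (hT : 0 < T)
    (hl : 1 < l) (hpos : ∀ t ≥ T, 0 < y t) (hM : ∀ t ≥ T, y t ≤ M)
    (hg : ∀ t ≥ T, l * (l - 1) * y t ≤ -g t) : ∀ t ≥ T, y' t ≤ -l * y t := by
  intro t₀ ht₀
  by_contra! hlt
  have hlim : Tendsto y' atTop atTop :=
    hy.tendsto_deriv_atTop_of_neg_mul_lt (hT.trans_le ht₀) hl (fun t ht => hpos t (ht₀.trans ht))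
      (fun t ht => hM t (ht₀.trans ht)) (fun t ht => hg t (ht₀.trans ht)) hlt
  obtain ⟨t₁, ht₁⟩ := eventually_atTop.1 (hlim.eventually_ge_atTop 1)
  have hy_atTop : Tendsto y atTop atTop :=
    tendsto_atTop_of_le_hasDerivAt (T := max t₁ T) one_pos
      (fun t ht => hy.hasDerivAt (hT.trans_le ((le_max_right _ _).trans ht)))
      (fun t ht => ht₁ t ((le_max_left _ _).trans ht))
  obtain ⟨t, hMt, ht⟩ :=
    ((hy_atTop.eventually_gt_atTop M).and (eventually_ge_atTop T)).exists
  exact (hM t ht).not_gt hMt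

lemma tendsto_sinh_mul_zero_of_deriv_le (hy : IsRadialSolution y₀ y y' g) {T l : ℝ} (hT : 0 < T)
    (hl : 1 < l) (hpos : ∀ t ≥ T, 0 < y t) (hy' : ∀ t ≥ T, y' t ≤ -l * y t) :
    Tendsto (fun t => sinh t * y t) atTop (𝓝 0) := by
  have hderiv : ∀ t ∈ Ici T,
      HasDerivAt (fun t => y t * exp (l * t)) ((y' t + l * y t) * exp (l * t)) t := by
    intro t ht
    have hexp : HasDerivAt (fun t => exp (l * t)) (exp (l * t) * (l * 1)) t :=
      ((hasDerivAt_id t).const_mul l).exp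
    exact ((hy.hasDerivAt (hT.trans_le ht)).mul hexp).congr_deriv (by ring)
  have hanti : AntitoneOn (fun t => y t * exp (l * t)) (Ici T) :=
    antitoneOn_of_hasDerivWithinAt_nonpos (convex_Ici T) (HasDerivAt.continuousOn hderiv)
      (fun t ht => (hderiv t (interior_subset ht)).hasDerivWithinAt)
      (fun t ht => mul_nonpos_of_nonpos_of_nonneg
        (by linarith [hy' t (interior_subset ht)]) (exp_pos _).le)
  have hbound : ∀ t ≥ T, sinh t * y t ≤ y T * exp (l * T) * exp (-((l - 1) * t)) := by
    intro t ht
    have hexp : exp (l * t) * exp (-((l - 1) * t)) = exp t := by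
      rw [← exp_add]
      ring_nf
    calc sinh t * y t ≤ exp t * y t :=
          mul_le_mul_of_nonneg_right (sinh_le_exp t) (hpos t ht).le
      _ = y t * exp (l * t) * exp (-((l - 1) * t)) := by rw [mul_assoc, hexp, mul_comm]
      _ ≤ y T * exp (l * T) * exp (-((l - 1) * t)) :=
          mul_le_mul_of_nonneg_right (hanti self_mem_Ici ht ht) (exp_pos _).le
  refine tendsto_of_tendsto_of_tendsto_of_le_of_le' (h := fun t =>
    y T * exp (l * T) * exp (-((l - 1) * t))) tendsto_const_nhds ?_
    ((eventually_ge_atTop T).mono fun t ht =>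
      mul_nonneg (sinh_nonneg_iff.2 (hT.le.trans ht)) (hpos t ht).le)
    ((eventually_ge_atTop T).mono hbound)
  simpa using (tendsto_exp_neg_atTop_nhds_zero.comp
    (tendsto_id.const_mul_atTop (sub_pos.2 hl))).const_mul (y T * exp (l * T))

/- The decay rate `l` is chosen with `1 < l` and `l (l - 1) ≤ κ`. -/
lemma eventually_deriv_neg_and_tendsto_sinh_mul_zero (hy : IsRadialSolution y₀ y y' g) {κ M : ℝ}
    (hκ : 0 < κ) (hpos : ∀ᶠ t in atTop, 0 < y t) (hM : ∀ᶠ t in atTop, y t ≤ M)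
    (hg : ∀ᶠ t in atTop, κ * y t ≤ -g t) :
    (∀ᶠ t in atTop, y' t < 0) ∧ Tendsto (fun t => sinh t * y t) atTop (𝓝 0) := by
  obtain ⟨T₀, hT₀⟩ := eventually_atTop.1 (hpos.and (hM.and hg))
  set T := max T₀ 1
  have hT : 0 < T := one_pos.trans_le (le_max_right _ _)
  have hlarge : ∀ t ≥ T, 0 < y t ∧ y t ≤ M ∧ κ * y t ≤ -g t := fun t ht =>
    hT₀ t ((le_max_left _ _).trans ht)
  set l := 1 + min 1 (κ / 2)
  have hl : 1 < l := lt_add_of_pos_right 1 (lt_min one_pos (half_pos hκ))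
  have hlκ : l * (l - 1) ≤ κ := by
    nlinarith [min_le_left 1 (κ / 2), min_le_right 1 (κ / 2)]
  have hy' : ∀ t ≥ T, y' t ≤ -l * y t :=
    hy.deriv_le_neg_mul_of_bounded hT hl (fun t ht => (hlarge t ht).1)
      (fun t ht => (hlarge t ht).2.1)
      (fun t ht => (mul_le_mul_of_nonneg_right hlκ (hlarge t ht).1.le).trans (hlarge t ht).2.2)
  refine ⟨?_, hy.tendsto_sinh_mul_zero_of_deriv_le hT hl (fun t ht => (hlarge t ht).1) hy'⟩
  filter_upwards [eventually_ge_atTop T] with t ht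
  exact (hy' t ht).trans_lt (by nlinarith [(hlarge t ht).1])

end IsRadialSolution

/-! ### Superlinear nonlinearities -/

/-- A nonlinearity `f` with derivative `f'` and potential `P`, normalized at `0`, for which
`s ↦ f s / s` is strictly increasing on `(0, ∞)`. -/
structure IsSuperlinear (f f' P : ℝ → ℝ) : Prop where
  hasDerivAt : ∀ s, HasDerivAt f (f' s) s
  hasDerivAt_potential : ∀ s, HasDerivAt P (f s) s
  map_zero : f 0 = 0
  potential_zero : P 0 = 0
  lt_mul_deriv : ∀ {s}, 0 < s → f s < s * f' s

namespace IsSuperlinear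

variable {f f' P : ℝ → ℝ} {s t : ℝ}

lemma continuous (hf : IsSuperlinear f f' P) : Continuous f :=
  continuous_iff_continuousAt.2 fun s => (hf.hasDerivAt s).continuousAt

lemma continuous_potential (hf : IsSuperlinear f f' P) : Continuous P :=
  continuous_iff_continuousAt.2 fun s => (hf.hasDerivAt_potential s).continuousAt

lemma two_mul_potential_lt (hf : IsSuperlinear f f' P) (hs : 0 < s) : 2 * P s < s * f s := by
  have hcont : Continuous fun s => s * f s - 2 * P s :=
    (continuous_id.mul hf.continuous).sub (hf.continuous_potential.const_mul 2)
  have hlim : Tendsto (fun s => s * f s - 2 * P s) (𝓝[>] 0) (𝓝 0) := by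
    simpa [hf.potential_zero] using (hcont.tendsto 0).mono_left nhdsWithin_le_nhds
  refine sub_pos.1 (lt_of_tendsto_nhdsGT_of_hasDerivAt_pos (g := fun s => s * f s - 2 * P s)
    (g' := fun s => s * f' s - f s) hs (fun s _ => ?_)
    (fun s hs => sub_pos.2 (hf.lt_mul_deriv hs.1)) hlim)
  refine (((hasDerivAt_id s).mul (hf.hasDerivAt s)).sub
    ((hf.hasDerivAt_potential s).const_mul 2)).congr_deriv ?_
  simp only [id]
  ring

lemma pos_of_potential_nonneg (hf : IsSuperlinear f f' P) (hs : 0 < s) (hP : 0 ≤ P s) : 0 < f s :=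
  pos_of_mul_pos_right (by linarith [hf.two_mul_potential_lt hs]) hs.le

lemma deriv_pos_of_pos (hf : IsSuperlinear f f' P) (hs : 0 < s) (hfs : 0 < f s) : 0 < f' s :=
  pos_of_mul_pos_right (hfs.trans (hf.lt_mul_deriv hs)) hs.le

lemma pos_of_le_of_pos (hf : IsSuperlinear f f' P) (hs : 0 < s) (hfs : 0 < f s) (hst : s ≤ t) :
    0 < f t := by
  have hderiv : ∀ r ∈ Icc s t, HasDerivAt (fun r => f r / r) ((r * f' r - f r) / r ^ 2) r := by
    intro r hr
    refine ((hf.hasDerivAt r).div (hasDerivAt_id r) (hs.trans_le hr.1).ne').congr_deriv ?_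
    simp only [id, mul_one, mul_comm]
  have hmono : MonotoneOn (fun r => f r / r) (Icc s t) :=
    monotoneOn_of_hasDerivWithinAt_nonneg (convex_Icc s t) (HasDerivAt.continuousOn hderiv)
      (fun r hr => (hderiv r (interior_subset hr)).hasDerivWithinAt)
      (fun r hr => div_nonneg
        (sub_nonneg.2 (hf.lt_mul_deriv (hs.trans_le (interior_subset hr).1)).le) (sq_nonneg r))
  have hle : f s / s ≤ f t / t := hmono ⟨le_rfl, hst⟩ ⟨hst, le_rfl⟩ hst
  exact (div_pos_iff_of_pos_right (hs.trans_le hst)).1 ((div_pos hfs hs).trans_le hle)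

end IsSuperlinear

/-! ### Energy and monotonicity of the profile -/

section Energy

variable {α T : ℝ} {f f' P u u' : ℝ → ℝ}

lemma antitoneOn_radialEnergy (hu : IsRadialSolution α u u' (fun t => f (u t)))
    (hP : ∀ s, HasDerivAt P (f s) s) : AntitoneOn (radialEnergy P u u') (Ioi 0) := by
  have hderiv : ∀ t ∈ Ioi (0 : ℝ),
      HasDerivAt (radialEnergy P u u') (-(cosh t / sinh t * u' t ^ 2)) t := by
    intro t ht
    refine ((((hu.hasDerivAt_deriv ht).pow 2).div_const 2).add
      ((hP (u t)).comp t (hu.hasDerivAt ht))).congr_deriv ?_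
    push_cast
    ring
  refine antitoneOn_of_hasDerivWithinAt_nonpos (convex_Ioi 0) (HasDerivAt.continuousOn hderiv)
    (fun t ht => (hderiv t (interior_subset ht)).hasDerivWithinAt) fun t ht => ?_
  have := sinh_pos_iff.2 (interior_subset ht : 0 < t)
  exact neg_nonpos.2 (by positivity)

lemma potential_le_radialEnergy (t : ℝ) : P (u t) ≤ radialEnergy P u u' t :=
  le_add_of_nonneg_left (by positivity)

/-- On `(0, T)` the profile `u` is positive and decreasing and its energy is nonnegative: the
situation of a solution up to its first zero, or of a ground state. -/
structure IsDecreasingProfile (P u u' : ℝ → ℝ) (T : ℝ) : Prop where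
  pos : ∀ t ∈ Ioo 0 T, 0 < u t
  deriv_neg : ∀ t ∈ Ioo 0 T, u' t < 0
  energy_nonneg : ∀ t ∈ Ioo 0 T, 0 ≤ radialEnergy P u u' t

namespace IsDecreasingProfile

lemma of_energy_nonneg (hf : IsSuperlinear f f' P)
    (hu : IsRadialSolution α u u' (fun t => f (u t))) (hα : 0 < α) (hT : 0 < T)
    (hpos : ∀ t ∈ Ioo 0 T, 0 < u t) (hE : ∀ t ∈ Ioo 0 T, 0 ≤ radialEnergy P u u' t) :
    IsDecreasingProfile P u u' T := by
  have hE_lim : Tendsto (radialEnergy P u u') (𝓝[>] 0) (𝓝 (0 ^ 2 / 2 + P α)) :=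
    ((hu.tendsto_deriv_zero.pow 2).div_const 2).add
      ((hf.continuous_potential.tendsto α).comp hu.tendsto_zero)
  have hPα : 0 ≤ 0 ^ 2 / 2 + P α := ge_of_tendsto hE_lim (eventually_of_mem (Ioo_mem_nhdsGT hT) hE)
  have hfα : 0 < f α := hf.pos_of_potential_nonneg hα (by linarith)
  have hfu : ∀ᶠ t in 𝓝[>] 0, 0 < f (u t) :=
    ((hf.continuous.tendsto α).comp hu.tendsto_zero).eventually_const_lt hfα
  refine ⟨hpos, fun t ht => ?_, hE⟩
  refine neg_of_hasDerivAt_neg_at_zeros (fun s hs => hu.hasDerivAt_deriv hs.1)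
    (hu.eventually_deriv_neg hfu) (fun d hd hd' _ => ?_) t ⟨ht.1, le_rfl⟩
  have hdT : d ∈ Ioo 0 T := ⟨hd.1, hd.2.trans_lt ht.2⟩
  have hEd := hE d hdT
  rw [radialEnergy, hd'] at hEd
  have hfd : 0 < f (u d) := hf.pos_of_potential_nonneg (hpos d hdT) (by linarith)
  rw [hd']
  linarith

lemma of_eq_zero (hf : IsSuperlinear f f' P) (hu : IsRadialSolution α u u' (fun t => f (u t)))
    (hα : 0 < α) (hT : 0 < T) (hpos : ∀ t ∈ Ioo 0 T, 0 < u t) (huT : u T = 0) :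
    IsDecreasingProfile P u u' T := by
  refine .of_energy_nonneg hf hu hα hT hpos fun t ht => ?_
  calc 0 = P (u T) := by rw [huT, hf.potential_zero]
    _ ≤ radialEnergy P u u' T := potential_le_radialEnergy T
    _ ≤ radialEnergy P u u' t :=
      antitoneOn_radialEnergy hu hf.hasDerivAt_potential ht.1 hT ht.2.le

lemma of_tendsto_zero (hf : IsSuperlinear f f' P) (hu : IsRadialSolution α u u' (fun t => f (u t)))
    (hα : 0 < α) (hT : 0 < T) (hpos : ∀ t ∈ Ioo 0 T, 0 < u t) (hlim : Tendsto u atTop (𝓝 0)) :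
    IsDecreasingProfile P u u' T := by
  have hP_lim : Tendsto (fun t => P (u t)) atTop (𝓝 0) :=
    hf.potential_zero ▸ (hf.continuous_potential.tendsto 0).comp hlim
  refine .of_energy_nonneg hf hu hα hT hpos fun t ht => le_of_tendsto hP_lim ?_
  filter_upwards [eventually_ge_atTop t] with s hs
  exact (potential_le_radialEnergy s).trans
    (antitoneOn_radialEnergy hu hf.hasDerivAt_potential ht.1 (ht.1.trans_le hs) hs)

lemma strictAntiOn {g : ℝ → ℝ} (hprof : IsDecreasingProfile P u u' T)
    (hu : IsRadialSolution α u u' g) : StrictAntiOn u (Ioo 0 T) :=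
  strictAntiOn_of_hasDerivWithinAt_neg (convex_Ioo 0 T) (hu.continuousOn.mono Ioo_subset_Ioi_self)
    (fun _ ht => (hu.hasDerivAt (interior_subset ht).1).hasDerivWithinAt)
    (fun t ht => hprof.deriv_neg t (interior_subset ht))

end IsDecreasingProfile

end Energy

/-! ### The dilated profile -/

/-- The comparison function `sinh · u' + β u`, an infinitesimal dilation of the profile `u`. -/
noncomputable def dilation (β : ℝ) (u u' : ℝ → ℝ) (t : ℝ) : ℝ :=
  sinh t * u' t + β * u t

/-- The derivative of `dilation β u u'` when `u'' + coth · u' + f(u) = 0`. -/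
noncomputable def dilationDeriv (β : ℝ) (f u u' : ℝ → ℝ) (t : ℝ) : ℝ :=
  -(sinh t * f (u t)) + β * u' t

/-- The Sturm coefficient: `v = dilation β u u'` satisfies
`v'' + coth · v' + f'(u) v = sturmGap f f' u β`. -/
noncomputable def sturmGap (f f' u : ℝ → ℝ) (β t : ℝ) : ℝ :=
  β * (u t * f' (u t) - f (u t)) - 2 * cosh t * f (u t)

/-- Once nonpositive on `(0, T)`, every Sturm coefficient with `0 < β` was negative before: it
changes sign at most once, from negative to positive. -/
def SturmGapChangesSignOnce (f f' u : ℝ → ℝ) (T : ℝ) : Prop :=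
  ∀ β > 0, ∀ t ∈ Ioo 0 T, sturmGap f f' u β t ≤ 0 → ∀ s ∈ Ioo 0 t, sturmGap f f' u β s < 0

section Comparison

variable {α w₀ β c T : ℝ} {f f' P u u' w w' : ℝ → ℝ}

lemma exists_pos_dilation_eq_zero (hc : 0 < c) (huc : 0 < u c) (hu'c : u' c < 0) :
    ∃ β > 0, dilation β u u' c = 0 := by
  refine ⟨-(sinh c * u' c) / u c, ?_, ?_⟩
  · exact div_pos (neg_pos.2 (mul_neg_of_pos_of_neg (sinh_pos_iff.2 hc) hu'c)) huc
  · rw [dilation, div_mul_cancel₀ _ huc.ne', add_neg_cancel]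

lemma isRadialSolution_dilation (hf : IsSuperlinear f f' P)
    (hu : IsRadialSolution α u u' (fun t => f (u t))) (β : ℝ) :
    IsRadialSolution (β * α) (dilation β u u') (dilationDeriv β f u u')
      (fun t => f' (u t) * dilation β u u' t - sturmGap f f' u β t) where
  hasDerivAt ht := (hu.hasDerivAt_sinh_mul_deriv ht).add ((hu.hasDerivAt ht).const_mul β)
  hasDerivAt_deriv {t} ht := by
    have := (sinh_pos_iff.2 ht).ne'
    refine (((hasDerivAt_sinh t).mul ((hf.hasDerivAt (u t)).comp t (hu.hasDerivAt ht))).neg.add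
      ((hu.hasDerivAt_deriv ht).const_mul β)).congr_deriv ?_
    simp only [dilation, dilationDeriv, sturmGap, Function.comp_apply]
    field_simp
    ring
  tendsto_zero := by
    have := hu.tendsto_sinh_mul_deriv.add (hu.tendsto_zero.const_mul β)
    rwa [zero_add] at this
  tendsto_deriv_zero := by
    have := (tendsto_sinh_nhdsGT_zero.mul
      ((hf.continuous.tendsto α).comp hu.tendsto_zero)).neg.add (hu.tendsto_deriv_zero.const_mul β)
    rwa [zero_mul, neg_zero, mul_zero, add_zero] at this

/- `(sinh · u' / u)' = - sinh · (u'² + u f(u)) / u²`, and `u'² ≥ - 2 P(u) > - u f(u)` by the energy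
bound, so `sinh · u' / u` decreases strictly. -/
lemma strictAntiOn_sinh_mul_deriv_div (hf : IsSuperlinear f f' P)
    (hu : IsRadialSolution α u u' (fun t => f (u t))) (hprof : IsDecreasingProfile P u u' T) :
    StrictAntiOn (fun t => sinh t * u' t / u t) (Ioo 0 T) := by
  have hderiv : ∀ t ∈ Ioo 0 T, HasDerivAt (fun t => sinh t * u' t / u t)
      (-(sinh t * (u' t ^ 2 + u t * f (u t)) / u t ^ 2)) t := by
    intro t ht
    refine ((hu.hasDerivAt_sinh_mul_deriv ht.1).div (hu.hasDerivAt ht.1)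
      (hprof.pos t ht).ne').congr_deriv ?_
    ring
  refine strictAntiOn_of_hasDerivWithinAt_neg (convex_Ioo 0 T) (HasDerivAt.continuousOn hderiv)
    (fun t ht => (hderiv t (interior_subset ht)).hasDerivWithinAt) fun t ht => ?_
  have ht : t ∈ Ioo 0 T := interior_subset ht
  have hut : 0 < u t := hprof.pos t ht
  have hE : 0 ≤ u' t ^ 2 / 2 + P (u t) := hprof.energy_nonneg t ht
  have hsum : 0 < u' t ^ 2 + u t * f (u t) := by linarith [hf.two_mul_potential_lt hut]
  have := sinh_pos_iff.2 ht.1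
  exact neg_neg_of_pos (by positivity)

lemma dilation_nonpos (hf : IsSuperlinear f f' P)
    (hu : IsRadialSolution α u u' (fun t => f (u t))) (hprof : IsDecreasingProfile P u u' T)
    (hc : c ∈ Ioo 0 T) (hβ : dilation β u u' c = 0) : ∀ t ∈ Ioc c T, dilation β u u' t ≤ 0 := by
  have hinterior : ∀ t ∈ Ioo c T, dilation β u u' t ≤ 0 := by
    intro t ht
    have ht' : t ∈ Ioo 0 T := ⟨hc.1.trans ht.1, ht.2⟩
    have huc := (hprof.pos c hc).ne'
    have hut := hprof.pos t ht'
    have hratio : sinh t * u' t / u t < sinh c * u' c / u c :=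
      strictAntiOn_sinh_mul_deriv_div hf hu hprof hc ht' ht.1
    have hβc : sinh c * u' c / u c = -β := by
      rw [div_eq_iff huc]
      linarith [show sinh c * u' c + β * u c = 0 from hβ]
    rw [hβc, div_lt_iff₀ hut] at hratio
    rw [dilation]
    linarith
  intro t ht
  rcases ht.2.lt_or_eq with htT | rfl
  · exact hinterior t ⟨ht.1, htT⟩
  · refine neg_nonneg.1 (nonneg_of_continuousAt_of_nonneg_Ioo (g := -dilation β u u') ht.1 ?_
      fun s hs => neg_nonneg.2 (hinterior s hs))
    exact ((isRadialSolution_dilation hf hu β).hasDerivAt (hc.1.trans hc.2)).continuousAt.neg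

/-! ### Signs of the linearized solution -/

lemma deriv_neg_of_first_zero (hf : IsSuperlinear f f' P)
    (hu : IsRadialSolution α u u' (fun t => f (u t)))
    (hw : IsRadialSolution w₀ w w' (fun t => f' (u t) * w t)) (hc : 0 < c)
    (hupos : ∀ t ∈ Ioo 0 c, 0 < u t) (huc : 0 < u c) (hwpos : ∀ t ∈ Ioo 0 c, 0 < w t)
    (hwc : w c = 0) : w' c < 0 := by
  have hW : 0 < radialWronskian w w' u u' c := hw.radialWronskian_pos hu hc fun t ht => by
    nlinarith [mul_lt_mul_of_pos_right (hf.lt_mul_deriv (hupos t ht)) (hwpos t ht)]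
  rw [radialWronskian, hwc, zero_mul, zero_sub] at hW
  have hmul : u c * w' c < 0 := neg_pos.1 (pos_of_mul_pos_right hW (sinh_pos_iff.2 hc).le)
  exact neg_of_mul_neg_right hmul huc.le

lemma sturmGap_pos_of_first_zero (hf : IsSuperlinear f f' P)
    (hu : IsRadialSolution α u u' (fun t => f (u t)))
    (hw : IsRadialSolution w₀ w w' (fun t => f' (u t) * w t))
    (hgap : SturmGapChangesSignOnce f f' u T) (hc : c ∈ Ioo 0 T)
    (hwpos : ∀ t ∈ Ioo 0 c, 0 < w t) (hwc : w c = 0) (hβ₀ : 0 < β) (hβ : dilation β u u' c = 0) :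
    ∀ t ∈ Ico c T, 0 < sturmGap f f' u β t := by
  intro t ht
  by_contra! hle
  have hneg : ∀ s ∈ Ioo 0 c, sturmGap f f' u β s < 0 := fun s hs =>
    hgap β hβ₀ t ⟨hc.1.trans_le ht.1, ht.2⟩ hle s ⟨hs.1, hs.2.trans_le ht.1⟩
  have hZ : 0 < radialWronskian (dilation β u u') (dilationDeriv β f u u') w w' c :=
    (isRadialSolution_dilation hf hu β).radialWronskian_pos hw hc.1 fun s hs => by
      nlinarith [mul_neg_of_neg_of_pos (hneg s hs) (hwpos s hs)]
  rw [radialWronskian, hβ, hwc] at hZ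
  linarith

lemma strictMonoOn_radialWronskian_dilation (hf : IsSuperlinear f f' P)
    (hu : IsRadialSolution α u u' (fun t => f (u t)))
    (hw : IsRadialSolution w₀ w w' (fun t => f' (u t) * w t)) {D : Set ℝ} (hD : Convex ℝ D)
    (hD₀ : D ⊆ Ioi 0) (hgap : ∀ t ∈ interior D, 0 < sturmGap f f' u β t)
    (hwneg : ∀ t ∈ interior D, w t < 0) :
    StrictMonoOn (radialWronskian (dilation β u u') (dilationDeriv β f u u') w w') D :=
  (isRadialSolution_dilation hf hu β).strictMonoOn_radialWronskian hw hD hD₀ fun t ht => by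
    nlinarith [mul_neg_of_pos_of_neg (hgap t ht) (hwneg t ht)]

/- At a first zero `d` of `w` after `c`, the Wronskian `Z` of the dilation and `w` would satisfy
`0 = Z c < Z d = sinh d * dilation d * w' d`, so `w' d < 0`: `w` cannot return to `0`. -/
lemma neg_after_first_zero (hf : IsSuperlinear f f' P)
    (hu : IsRadialSolution α u u' (fun t => f (u t)))
    (hw : IsRadialSolution w₀ w w' (fun t => f' (u t) * w t))
    (hprof : IsDecreasingProfile P u u' T) (hc : c ∈ Ioo 0 T)
    (hwpos : ∀ t ∈ Ioo 0 c, 0 < w t) (hwc : w c = 0) (hβ : dilation β u u' c = 0)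
    (hgap : ∀ t ∈ Ico c T, 0 < sturmGap f f' u β t) : ∀ t ∈ Ioc c T, w t < 0 := by
  have hw'c : w' c < 0 := deriv_neg_of_first_zero hf hu hw hc.1
    (fun t ht => hprof.pos t ⟨ht.1, ht.2.trans hc.2⟩) (hprof.pos c hc) hwpos hwc
  refine neg_of_hasDerivAt_neg_at_zeros (fun t ht => hw.hasDerivAt (hc.1.trans ht.1))
    (eventually_neg_of_hasDerivAt_neg (hw.hasDerivAt hc.1) hw'c hwc) fun d hd hwd hwneg => ?_
  have hZ : radialWronskian (dilation β u u') (dilationDeriv β f u u') w w' c <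
      radialWronskian (dilation β u u') (dilationDeriv β f u u') w w' d := by
    refine strictMonoOn_radialWronskian_dilation hf hu hw (convex_Icc c d)
      (fun t ht => hc.1.trans_le ht.1) (fun t ht => ?_) (fun t ht => ?_)
      ⟨le_rfl, hd.1.le⟩ ⟨hd.1.le, le_rfl⟩ hd.1
    all_goals rw [interior_Icc] at ht
    · exact hgap t ⟨ht.1.le, ht.2.trans_le hd.2⟩
    · exact hwneg t ht
  rw [radialWronskian, radialWronskian, hβ, hwc, hwd, zero_mul, zero_mul, sub_zero, mul_zero,
    zero_mul, sub_zero] at hZ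
  have hmul : 0 < dilation β u u' d * w' d :=
    pos_of_mul_pos_right hZ (sinh_pos_iff.2 (hc.1.trans hd.1)).le
  exact neg_of_mul_pos_right hmul (dilation_nonpos hf hu hprof hc hβ d hd)

/-! ### Profiles with a zero -/

lemma exists_nonpos_of_profile_eq_zero (hf : IsSuperlinear f f' P)
    (hu : IsRadialSolution α u u' (fun t => f (u t)))
    (hw : IsRadialSolution w₀ w w' (fun t => f' (u t) * w t)) (hT : 0 < T)
    (hprof : IsDecreasingProfile P u u' T) (huT : u T = 0) : ∃ t ∈ Ioo 0 T, w t ≤ 0 := by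
  by_contra! hwpos
  have hW : 0 < radialWronskian w w' u u' T := hw.radialWronskian_pos hu hT fun t ht => by
    nlinarith [mul_lt_mul_of_pos_right (hf.lt_mul_deriv (hprof.pos t ht)) (hwpos t ht)]
  have hwT : 0 ≤ w T := nonneg_of_continuousAt_of_nonneg_Ioo hT (hw.hasDerivAt hT).continuousAt
    fun t ht => (hwpos t ht).le
  have hu'T : 0 ≤ -u' T := nonneg_of_continuousAt_of_nonneg_Ioo (g := -u') hT
    (hu.hasDerivAt_deriv hT).continuousAt.neg fun t ht => neg_nonneg.2 (hprof.deriv_neg t ht).le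
  rw [radialWronskian, huT, zero_mul, sub_zero] at hW
  have hmul : 0 < w T * u' T := pos_of_mul_pos_right hW (sinh_pos_iff.2 hT).le
  exact hmul.not_ge (mul_nonpos_of_nonneg_of_nonpos hwT (neg_nonneg.1 hu'T))

theorem existsUnique_zero_and_neg_of_profile_eq_zero (hf : IsSuperlinear f f' P)
    (hu : IsRadialSolution α u u' (fun t => f (u t)))
    (hw : IsRadialSolution w₀ w w' (fun t => f' (u t) * w t)) (hw₀ : 0 < w₀) (hT : 0 < T)
    (hprof : IsDecreasingProfile P u u' T) (huT : u T = 0)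
    (hgap : SturmGapChangesSignOnce f f' u T) : (∃! t, t ∈ Ioo 0 T ∧ w t = 0) ∧ w T < 0 := by
  obtain ⟨s, hs, hws⟩ := exists_nonpos_of_profile_eq_zero hf hu hw hT hprof huT
  obtain ⟨c, hc, hwc, hwpos⟩ := exists_first_zero hs.1
    (hw.continuousOn.mono Ioc_subset_Ioi_self) (hw.tendsto_zero.eventually_const_lt hw₀) hws
  have hcT : c ∈ Ioo 0 T := ⟨hc.1, hc.2.trans_lt hs.2⟩
  obtain ⟨β, hβ₀, hβ⟩ :=
    exists_pos_dilation_eq_zero hc.1 (hprof.pos c hcT) (hprof.deriv_neg c hcT)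
  have hwneg : ∀ t ∈ Ioc c T, w t < 0 := neg_after_first_zero hf hu hw hprof hcT hwpos hwc hβ
    (sturmGap_pos_of_first_zero hf hu hw hgap hcT hwpos hwc hβ₀ hβ)
  refine ⟨existsUnique_zero_of_ne_zero hcT hwc (fun t ht htc => ?_) (fun t ht hct => ?_), ?_⟩
  · exact (hwpos t ⟨ht.1, htc⟩).ne'
  · exact (hwneg t ⟨hct, ht.2.le⟩).ne
  · exact hwneg T ⟨hcT.2, le_rfl⟩

/-! ### Ground states -/

lemma profile_decay (hf : IsSuperlinear f f' P) (hf'_cont : ContinuousAt f' 0) (hf'₀ : f' 0 < 0)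
    (hu : IsRadialSolution α u u' (fun t => f (u t))) (hupos : ∀ t > 0, 0 < u t)
    (hlim : Tendsto u atTop (𝓝 0)) :
    (∀ᶠ t in atTop, u' t < 0) ∧ Tendsto (fun t => sinh t * u t) atTop (𝓝 0) := by
  have hpos : ∀ᶠ t in atTop, 0 < u t := (eventually_gt_atTop 0).mono hupos
  have hf'u : ∀ᶠ t in atTop, f' (u t) < f' 0 / 2 :=
    (hf'_cont.tendsto.comp hlim).eventually_lt_const (by linarith)
  refine hu.eventually_deriv_neg_and_tendsto_sinh_mul_zero (κ := -(f' 0 / 2)) (M := 1)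
    (by linarith) hpos (hlim.eventually_le_const one_pos) ?_
  filter_upwards [hpos, hf'u] with t ht hf't
  nlinarith [hf.lt_mul_deriv ht]

lemma neg_linearized_decay (hf'_cont : ContinuousAt f' 0) (hf'₀ : f' 0 < 0)
    (hw : IsRadialSolution w₀ w w' (fun t => f' (u t) * w t)) (hlim : Tendsto u atTop (𝓝 0))
    {M : ℝ} (hM : ∀ t > 0, |w t| ≤ M) (hwneg : ∀ᶠ t in atTop, w t < 0) :
    (∀ᶠ t in atTop, 0 < w' t) ∧ Tendsto (fun t => sinh t * -w t) atTop (𝓝 0) := by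
  have hf'u : ∀ᶠ t in atTop, f' (u t) < f' 0 / 2 :=
    (hf'_cont.tendsto.comp hlim).eventually_lt_const (by linarith)
  obtain ⟨hw', hdecay⟩ := hw.neg.eventually_deriv_neg_and_tendsto_sinh_mul_zero
    (κ := -(f' 0 / 2)) (M := M) (by linarith) (hwneg.mono fun t => neg_pos.2)
    ((eventually_gt_atTop 0).mono fun t ht => (neg_le_abs _).trans (hM t ht)) <| by
      filter_upwards [hwneg, hf'u] with t ht hf't
      simp only [Pi.neg_apply]
      nlinarith
  exact ⟨hw'.mono fun t => neg_lt_zero.1, hdecay⟩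

/- If `w` stayed positive, then `(w / u)' = - W / (sinh · u²)`, where the Wronskian `W` is bounded
below by a positive constant and `sinh · u² → 0`; so `w / u → -∞`. -/
lemma exists_nonpos_of_ground_state (hf : IsSuperlinear f f' P) (hf'_cont : ContinuousAt f' 0)
    (hf'₀ : f' 0 < 0) (hu : IsRadialSolution α u u' (fun t => f (u t)))
    (hw : IsRadialSolution w₀ w w' (fun t => f' (u t) * w t)) (hupos : ∀ t > 0, 0 < u t)
    (hlim : Tendsto u atTop (𝓝 0)) : ∃ t > 0, w t ≤ 0 := by
  by_contra! hwpos
  have hlt : ∀ t > 0, f (u t) * w t < f' (u t) * w t * u t := fun t ht => by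
    nlinarith [mul_lt_mul_of_pos_right (hf.lt_mul_deriv (hupos t ht)) (hwpos t ht)]
  set W := radialWronskian w w' u u' with hW_def
  have hW₁ : 0 < W 1 := hw.radialWronskian_pos hu one_pos fun t ht => hlt t ht.1
  have hW : ∀ t ≥ 1, W 1 ≤ W t := fun t ht =>
    (hw.strictMonoOn_radialWronskian hu (convex_Ioi 0) subset_rfl
      fun t ht => hlt t (interior_subset ht)).monotoneOn (mem_Ioi.2 one_pos)
        (one_pos.trans_le ht) ht
  have hsq : Tendsto (fun t => sinh t * u t * u t) atTop (𝓝 0) := by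
    simpa using (profile_decay hf hf'_cont hf'₀ hu hupos hlim).2.mul hlim
  obtain ⟨T, hT⟩ := eventually_atTop.1 (hsq.eventually_le_const one_pos)
  have hderiv : ∀ t > 0, HasDerivAt (fun t => -(w t / u t)) (W t / (sinh t * u t * u t)) t := by
    intro t ht
    have hut := (hupos t ht).ne'
    have := (sinh_pos_iff.2 ht).ne'
    refine ((hw.hasDerivAt ht).div (hu.hasDerivAt ht) hut).neg.congr_deriv ?_
    rw [hW_def, radialWronskian]
    field_simp
    ring
  have hquot : Tendsto (fun t => -(w t / u t)) atTop atTop := by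
    refine tendsto_atTop_of_le_hasDerivAt (T := max T 1) hW₁
      (fun t ht => hderiv t (one_pos.trans_le ((le_max_right _ _).trans ht))) fun t ht => ?_
    have ht₁ : 1 ≤ t := (le_max_right _ _).trans ht
    have := sinh_pos_iff.2 (one_pos.trans_le ht₁)
    have := hupos t (one_pos.trans_le ht₁)
    rw [le_div_iff₀ (by positivity)]
    exact (mul_le_of_le_one_right hW₁.le (hT t ((le_max_left _ _).trans ht))).trans (hW t ht₁)
  obtain ⟨t, hneg, ht⟩ := ((hquot.eventually_gt_atTop 0).and (eventually_gt_atTop 0)).exists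
  exact (neg_pos.1 hneg).not_ge (div_pos (hwpos t ht) (hupos t ht)).le

lemma exists_neg_comp_le_mul (hf : IsSuperlinear f f' P) (hlim : Tendsto u atTop (𝓝 0)) :
    ∃ K, ∀ᶠ t in atTop, -f (u t) ≤ K * |u t| := by
  obtain ⟨K, hK⟩ := ((hf.hasDerivAt 0).isBigO_sub.comp_tendsto hlim).bound
  refine ⟨K, hK.mono fun t ht => ?_⟩
  simp only [Function.comp_apply, hf.map_zero, sub_zero, norm_eq_abs] at ht
  exact (neg_le_abs _).trans ht

lemma radialWronskian_dilation_le {K t : ℝ} (ht : 0 < t) (hβ₀ : 0 < β)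
    (hdil : dilation β u u' t ≤ 0) (hu' : u' t < 0) (hw : w t < 0) (hw' : 0 < w' t)
    (hK : -f (u t) ≤ K * u t) :
    radialWronskian (dilation β u u') (dilationDeriv β f u u') w w' t ≤
      K * ((sinh t * -w t) * (sinh t * u t)) := by
  have hsinh : 0 < sinh t := sinh_pos_iff.2 ht
  have hwt : 0 ≤ -w t := (neg_pos.2 hw).le
  have hdil' : dilationDeriv β f u u' t ≤ sinh t * (K * u t) := by
    have := mul_le_mul_of_nonneg_left hK hsinh.le
    have := mul_neg_of_pos_of_neg hβ₀ hu'
    rw [dilationDeriv]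
    linarith
  calc radialWronskian (dilation β u u') (dilationDeriv β f u u') w w' t
    _ = sinh t * (dilation β u u' t * w' t + -w t * dilationDeriv β f u u' t) := by
      rw [radialWronskian]
      ring
    _ ≤ sinh t * (0 + -w t * (sinh t * (K * u t))) := by
      gcongr
      exact mul_nonpos_of_nonpos_of_nonneg hdil hw'.le
    _ = K * ((sinh t * -w t) * (sinh t * u t)) := by ring

/- Bounded, `w` would decay with `u`; then the Wronskian of the dilation and `w`, positive and
increasing after `c`, would tend to `0`. -/
lemma not_bounded_of_ground_state (hf : IsSuperlinear f f' P) (hf'_cont : ContinuousAt f' 0)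
    (hf'₀ : f' 0 < 0) (hu : IsRadialSolution α u u' (fun t => f (u t)))
    (hw : IsRadialSolution w₀ w w' (fun t => f' (u t) * w t)) (hupos : ∀ t > 0, 0 < u t)
    (hlim : Tendsto u atTop (𝓝 0)) (hc : 0 < c) (hwc : w c = 0) (hβ₀ : 0 < β)
    (hβ : dilation β u u' c = 0) (hdil : ∀ t > c, dilation β u u' t ≤ 0)
    (hgap : ∀ t > c, 0 < sturmGap f f' u β t) (hwneg : ∀ t > c, w t < 0) :
    ¬ ∃ M, ∀ t > 0, |w t| ≤ M := by
  rintro ⟨M, hM⟩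
  obtain ⟨hu', hu_decay⟩ := profile_decay hf hf'_cont hf'₀ hu hupos hlim
  obtain ⟨hw', hw_decay⟩ := neg_linearized_decay hf'_cont hf'₀ hw hlim hM
    ((eventually_gt_atTop c).mono hwneg)
  obtain ⟨K, hK⟩ := exists_neg_comp_le_mul hf hlim
  set Z := radialWronskian (dilation β u u') (dilationDeriv β f u u') w w' with hZ_def
  have hmono : StrictMonoOn Z (Ici c) :=
    strictMonoOn_radialWronskian_dilation hf hu hw (convex_Ici c) (fun t ht => hc.trans_le ht)
      (fun t ht => hgap t (interior_Ici.subset ht)) (fun t ht => hwneg t (interior_Ici.subset ht))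
  have hZc : Z c = 0 := by
    rw [hZ_def, radialWronskian, hβ, hwc, zero_mul, zero_mul, sub_zero, mul_zero]
  have hZ_pos : 0 < Z (c + 1) :=
    hZc ▸ hmono self_mem_Ici (show c ≤ c + 1 by linarith) (by linarith)
  have hbound : ∀ᶠ t in atTop, Z (c + 1) ≤ K * ((sinh t * -w t) * (sinh t * u t)) := by
    filter_upwards [hu', hw', hK, eventually_ge_atTop (c + 1)] with t hu't hw't hKt hct
    have hct' : c < t := (lt_add_one c).trans_le hct
    rw [abs_of_pos (hupos t (hc.trans hct'))] at hKt
    exact (hmono.monotoneOn (show c ≤ c + 1 by linarith) hct'.le hct).trans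
      (radialWronskian_dilation_le (hc.trans hct') hβ₀ (hdil t hct') hu't (hwneg t hct') hw't hKt)
  have hlim_bound : Tendsto (fun t => K * ((sinh t * -w t) * (sinh t * u t))) atTop (𝓝 0) := by
    simpa using (hw_decay.mul hu_decay).const_mul K
  exact hZ_pos.not_ge (ge_of_tendsto hlim_bound hbound)

theorem existsUnique_zero_and_not_bounded_of_ground_state (hf : IsSuperlinear f f' P)
    (hf'_cont : ContinuousAt f' 0) (hf'₀ : f' 0 < 0)
    (hu : IsRadialSolution α u u' (fun t => f (u t)))
    (hw : IsRadialSolution w₀ w w' (fun t => f' (u t) * w t)) (hw₀ : 0 < w₀)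
    (hprof : ∀ T > 0, IsDecreasingProfile P u u' T) (hlim : Tendsto u atTop (𝓝 0))
    (hgap : ∀ T > 0, SturmGapChangesSignOnce f f' u T) :
    (∃! t, t ∈ Ioi 0 ∧ w t = 0) ∧ ¬ ∃ M, ∀ t ∈ Ioi 0, |w t| ≤ M := by
  have hupos : ∀ t > 0, 0 < u t := fun t ht =>
    (hprof (t + 1) (by linarith)).pos t ⟨ht, lt_add_one t⟩
  obtain ⟨s, hs, hws⟩ := exists_nonpos_of_ground_state hf hf'_cont hf'₀ hu hw hupos hlim
  obtain ⟨c, ⟨hc, -⟩, hwc, hwpos⟩ := exists_first_zero hs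
    (hw.continuousOn.mono Ioc_subset_Ioi_self) (hw.tendsto_zero.eventually_const_lt hw₀) hws
  have hu'c : u' c < 0 := (hprof (c + 1) (by linarith)).deriv_neg c ⟨hc, lt_add_one c⟩
  obtain ⟨β, hβ₀, hβ⟩ := exists_pos_dilation_eq_zero hc (hupos c hc) hu'c
  have hgap_pos : ∀ t ≥ c, 0 < sturmGap f f' u β t := fun t ht =>
    sturmGap_pos_of_first_zero hf hu hw (hgap (t + 1) (by linarith)) ⟨hc, by linarith⟩ hwpos hwc
      hβ₀ hβ t ⟨ht, lt_add_one t⟩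
  have hdil : ∀ t > c, dilation β u u' t ≤ 0 := fun t ht =>
    dilation_nonpos hf hu (hprof t (hc.trans ht)) ⟨hc, ht⟩ hβ t ⟨ht, le_rfl⟩
  have hwneg : ∀ t > c, w t < 0 := fun t ht =>
    neg_after_first_zero hf hu hw (hprof t (hc.trans ht)) ⟨hc, ht⟩ hwpos hwc hβ
      (fun s hs => hgap_pos s hs.1) t ⟨ht, le_rfl⟩
  exact ⟨existsUnique_zero_of_ne_zero hc hwc (fun t ht htc => (hwpos t ⟨ht, htc⟩).ne')
      (fun t _ hct => (hwneg t hct).ne),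
    not_bounded_of_ground_state hf hf'_cont hf'₀ hu hw hupos hlim hc hwc hβ₀ hβ hdil
      (fun t ht => hgap_pos t (le_of_lt ht)) hwneg⟩

/-! ### Sign changes of the Sturm coefficient -/

lemma comp_mul_cosh_sub_one_lt (hf : IsSuperlinear f f' P)
    (hu : IsRadialSolution α u u' (fun t => f (u t))) (hT : 0 < T)
    (hu'neg : ∀ t ∈ Ioo 0 T, u' t < 0) (hf'pos : ∀ t ∈ Ioo 0 T, 0 < f' (u t)) :
    f (u T) * (cosh T - 1) < -(sinh T * u' T) := by
  have hderiv : ∀ t ∈ Ioc 0 T,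
      HasDerivAt (fun t => -(sinh t * u' t) - f (u t) * (cosh t - 1))
        (-(f' (u t) * u' t * (cosh t - 1))) t := by
    intro t ht
    refine ((hu.hasDerivAt_sinh_mul_deriv ht.1).neg.sub (((hf.hasDerivAt (u t)).comp t
      (hu.hasDerivAt ht.1)).mul ((hasDerivAt_cosh t).sub_const 1))).congr_deriv ?_
    simp only [Function.comp_apply]
    ring
  have hcosh : Tendsto (fun t => cosh t - 1) (𝓝[>] 0) (𝓝 0) := by
    simpa using ((continuous_cosh.tendsto 0).mono_left nhdsWithin_le_nhds).sub_const 1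
  have hlim : Tendsto (fun t => -(sinh t * u' t) - f (u t) * (cosh t - 1)) (𝓝[>] 0) (𝓝 0) := by
    simpa using hu.tendsto_sinh_mul_deriv.neg.sub
      (((hf.continuous.tendsto α).comp hu.tendsto_zero).mul hcosh)
  refine sub_pos.1 (lt_of_tendsto_nhdsGT_of_hasDerivAt_pos
    (g := fun t => -(sinh t * u' t) - f (u t) * (cosh t - 1)) hT hderiv (fun t ht => ?_) hlim)
  exact neg_pos.2 (mul_neg_of_neg_of_pos
    (mul_neg_of_pos_of_neg (hf'pos t ht) (hu'neg t ht)) (sub_pos.2 (one_lt_cosh.2 ht.1.ne')))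

/-- The inverse excess `f(s) / (s f'(s) - f(s))`; when it is composed with `u` and multiplied by
`2 cosh`, its value is the `β` at which `sturmGap` vanishes. -/
noncomputable def inverseExcess (f f' : ℝ → ℝ) (s : ℝ) : ℝ :=
  f s / (s * f' s - f s)

lemma hasDerivAt_inverseExcess (hf : IsSuperlinear f f' P) {s f₂ : ℝ} (hs : 0 < s)
    (hf' : HasDerivAt f' f₂ s) :
    HasDerivAt (inverseExcess f f')
      ((f' s * (s * f' s - f s) - s * f s * f₂) / (s * f' s - f s) ^ 2) s := by
  refine ((hf.hasDerivAt s).div (((hasDerivAt_id s).mul hf').sub (hf.hasDerivAt s))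
    (sub_pos.2 (hf.lt_mul_deriv hs)).ne').congr_deriv ?_
  simp only [id, Pi.sub_apply, Pi.mul_apply]
  ring

lemma two_mul_inverseExcess_le (hf : IsSuperlinear f f' P) {s f₂ : ℝ} (hs : 0 < s)
    (hfs : 0 < f s)
    (hsteep : 2 * (s * f' s - f s) ≤ f' s * (s * f' s - f s) - s * f s * f₂) :
    2 * inverseExcess f f' s ≤
      (f' s * (s * f' s - f s) - s * f s * f₂) / (s * f' s - f s) ^ 2 * f s := by
  have hexcess : 0 < s * f' s - f s := sub_pos.2 (hf.lt_mul_deriv hs)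
  have := mul_le_mul_of_nonneg_right hsteep hfs.le
  rw [inverseExcess, mul_div_assoc', div_mul_eq_mul_div,
    div_le_div_iff₀ hexcess (by positivity)]
  nlinarith

/- Multiplied by `sinh t`, the left side is less than
`ρ (cosh² t - 1) - cosh t (cosh t - 1) ρ' y ≤ - ρ (cosh t - 1)²`. -/
lemma sinh_mul_add_cosh_mul_neg {ρ ρ' y y' t : ℝ} (ht : 0 < t) (hρ : 0 < ρ) (hy : 0 < y)
    (hρ'y : 2 * ρ ≤ ρ' * y) (hslope : y * (cosh t - 1) < -(sinh t * y')) :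
    sinh t * ρ + cosh t * (ρ' * y') < 0 := by
  have hρ' : 0 < ρ' := pos_of_mul_pos_left (by linarith) hy.le
  have hcosh : 0 < cosh t - 1 := sub_pos.2 (one_lt_cosh.2 ht.ne')
  refine neg_of_mul_neg_right ?_ (sinh_pos_iff.2 ht).le
  calc sinh t * (sinh t * ρ + cosh t * (ρ' * y'))
    _ = ρ * (cosh t ^ 2 - 1) - cosh t * ρ' * -(sinh t * y') := by rw [cosh_sq]; ring
    _ < ρ * (cosh t ^ 2 - 1) - cosh t * ρ' * (y * (cosh t - 1)) := by gcongr
    _ = ρ * (cosh t ^ 2 - 1) - cosh t * (cosh t - 1) * (ρ' * y) := by ring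
    _ ≤ ρ * (cosh t ^ 2 - 1) - cosh t * (cosh t - 1) * (2 * ρ) := by gcongr
    _ = -(ρ * (cosh t - 1) ^ 2) := by ring
    _ ≤ 0 := neg_nonpos.2 (by positivity)

lemma strictAntiOn_cosh_mul_inverseExcess (hf : IsSuperlinear f f' P) {f₂ : ℝ → ℝ}
    (hf' : ∀ s > 0, HasDerivAt f' (f₂ s) s)
    (hsteep : ∀ s > 0, 2 * (s * f' s - f s) ≤ f' s * (s * f' s - f s) - s * f s * f₂ s)
    (hu : IsRadialSolution α u u' (fun t => f (u t))) (hupos : ∀ t ∈ Ioc 0 T, 0 < u t)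
    (hu'neg : ∀ t ∈ Ioc 0 T, u' t < 0) (hfpos : ∀ t ∈ Ioc 0 T, 0 < f (u t)) :
    StrictAntiOn (fun t => cosh t * inverseExcess f f' (u t)) (Ioc 0 T) := by
  have hderiv := fun t (ht : t ∈ Ioc 0 T) => (hasDerivAt_cosh t).mul
    ((hasDerivAt_inverseExcess hf (hupos t ht) (hf' _ (hupos t ht))).comp t (hu.hasDerivAt ht.1))
  refine strictAntiOn_of_hasDerivWithinAt_neg (convex_Ioc 0 T) (HasDerivAt.continuousOn hderiv)
    (fun t ht => (hderiv t (interior_subset ht)).hasDerivWithinAt) fun t ht => ?_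
  have ht : t ∈ Ioc 0 T := interior_subset ht
  have hsub : ∀ s ∈ Ioo 0 t, s ∈ Ioc 0 T := fun s hs => ⟨hs.1, hs.2.le.trans ht.2⟩
  have hslope : f (u t) * (cosh t - 1) < -(sinh t * u' t) :=
    comp_mul_cosh_sub_one_lt hf hu ht.1 (fun s hs => hu'neg s (hsub s hs))
      fun s hs => hf.deriv_pos_of_pos (hupos s (hsub s hs)) (hfpos s (hsub s hs))
  exact sinh_mul_add_cosh_mul_neg ht.1
    (div_pos (hfpos t ht) (sub_pos.2 (hf.lt_mul_deriv (hupos t ht)))) (hfpos t ht)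
    (two_mul_inverseExcess_le hf (hupos t ht) (hfpos t ht) (hsteep _ (hupos t ht))) hslope

lemma sturmGap_eq (hf : IsSuperlinear f f' P) {t : ℝ} (hut : 0 < u t) :
    sturmGap f f' u β t =
      (u t * f' (u t) - f (u t)) * (β - 2 * (cosh t * inverseExcess f f' (u t))) := by
  have := (sub_pos.2 (hf.lt_mul_deriv hut)).ne'
  rw [sturmGap, inverseExcess]
  field_simp

theorem sturmGapChangesSignOnce_of_steep (hf : IsSuperlinear f f' P) {f₂ : ℝ → ℝ}
    (hf' : ∀ s > 0, HasDerivAt f' (f₂ s) s)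
    (hsteep : ∀ s > 0, 2 * (s * f' s - f s) ≤ f' s * (s * f' s - f s) - s * f s * f₂ s)
    (hu : IsRadialSolution α u u' (fun t => f (u t))) (hprof : IsDecreasingProfile P u u' T) :
    SturmGapChangesSignOnce f f' u T := by
  intro β hβ₀ t ht hle s hs
  have hsub : ∀ r ∈ Ioc 0 t, r ∈ Ioo 0 T := fun r hr => ⟨hr.1, hr.2.trans_lt ht.2⟩
  have hexcess : ∀ r ∈ Ioc 0 t, 0 < u r * f' (u r) - f (u r) := fun r hr =>
    sub_pos.2 (hf.lt_mul_deriv (hprof.pos r (hsub r hr)))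
  have htt : t ∈ Ioc 0 t := ⟨ht.1, le_rfl⟩
  have hst : s ∈ Ioc 0 t := ⟨hs.1, hs.2.le⟩
  have hft : 0 < f (u t) := by
    have hpos : 0 < 2 * cosh t * f (u t) := by
      rw [sturmGap] at hle
      linarith [mul_pos hβ₀ (hexcess t htt)]
    exact pos_of_mul_pos_right hpos (by positivity)
  have hanti := strictAntiOn_cosh_mul_inverseExcess hf hf' hsteep hu
    (fun r hr => hprof.pos r (hsub r hr)) (fun r hr => hprof.deriv_neg r (hsub r hr))
    fun r hr => hf.pos_of_le_of_pos (hprof.pos t ht) hft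
      ((hprof.strictAntiOn hu).antitoneOn (hsub r hr) ht hr.2)
  have hlt : cosh t * inverseExcess f f' (u t) < cosh s * inverseExcess f f' (u s) :=
    hanti hst htt hs.2
  rw [sturmGap_eq hf (hprof.pos t ht)] at hle
  rw [sturmGap_eq hf (hprof.pos s (hsub s hst))]
  have hβt : β - 2 * (cosh t * inverseExcess f f' (u t)) ≤ 0 :=
    nonpos_of_mul_nonpos_right hle (hexcess t htt)
  exact mul_neg_of_pos_of_neg (hexcess s hst) (by linarith)

end Comparison

/-! ### Power nonlinearities -/

/-- The nonlinearity `a s^(1+q) - b s`; the paper's `f` is the case `q = 2/m`. -/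
noncomputable def powerSource (q a b s : ℝ) : ℝ :=
  a * s ^ (1 + q) - b * s

/-- The derivative of `powerSource`. -/
noncomputable def powerSourceDeriv (q a b s : ℝ) : ℝ :=
  a * (1 + q) * s ^ q - b

/-- The antiderivative of `powerSource` that vanishes at `0`. -/
noncomputable def powerPotential (q a b s : ℝ) : ℝ :=
  a / (2 + q) * s ^ (2 + q) - b / 2 * s ^ 2

section Power

variable {q a b s : ℝ}

lemma mul_powerSourceDeriv_sub_powerSource (hs : 0 < s) :
    s * powerSourceDeriv q a b s - powerSource q a b s = a * q * (s * s ^ q) := by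
  rw [powerSourceDeriv, powerSource, rpow_add hs, rpow_one]
  ring

lemma isSuperlinear_powerSource (hq : 0 < q) (ha : 0 < a) :
    IsSuperlinear (powerSource q a b) (powerSourceDeriv q a b) (powerPotential q a b) where
  hasDerivAt s := by
    refine (((hasDerivAt_rpow_const (p := 1 + q) (Or.inr (by linarith))).const_mul a).sub
      ((hasDerivAt_id s).const_mul b)).congr_deriv ?_
    rw [powerSourceDeriv, add_sub_cancel_left]
    ring
  hasDerivAt_potential s := by
    have : 2 + q ≠ 0 := by positivity
    refine (((hasDerivAt_rpow_const (p := 2 + q) (Or.inr (by linarith))).const_mul _).sub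
      (((hasDerivAt_id s).pow 2).const_mul _)).congr_deriv ?_
    rw [powerSource, show 2 + q - 1 = 1 + q by ring]
    field_simp
    simp only [id, Nat.cast_ofNat, Nat.add_one_sub_one, pow_one]
    ring
  map_zero := by rw [powerSource, zero_rpow (by positivity)]; ring
  potential_zero := by rw [powerPotential, zero_rpow (by positivity)]; ring
  lt_mul_deriv hs := sub_pos.1 <| by
    rw [mul_powerSourceDeriv_sub_powerSource hs]
    positivity

lemma continuous_powerSourceDeriv (hq : 0 ≤ q) : Continuous (powerSourceDeriv q a b) :=
  ((continuous_rpow_const hq).const_mul _).sub continuous_const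

lemma powerSourceDeriv_zero (hq : q ≠ 0) : powerSourceDeriv q a b 0 = -b := by
  rw [powerSourceDeriv, zero_rpow hq, mul_zero, zero_sub]

lemma hasDerivAt_powerSourceDeriv (hs : 0 < s) :
    HasDerivAt (powerSourceDeriv q a b) (a * (1 + q) * (q * s ^ (q - 1))) s :=
  ((hasDerivAt_rpow_const (Or.inl hs.ne')).const_mul _).sub_const b

lemma powerSource_steep (hq : 0 < q) (ha : 0 < a) (hbq : 2 ≤ b * q) (hs : 0 < s) :
    2 * (s * powerSourceDeriv q a b s - powerSource q a b s) ≤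
      powerSourceDeriv q a b s * (s * powerSourceDeriv q a b s - powerSource q a b s)
        - s * powerSource q a b s * (a * (1 + q) * (q * s ^ (q - 1))) := by
  calc 2 * (s * powerSourceDeriv q a b s - powerSource q a b s)
    _ ≤ b * q * (a * q * (s * s ^ q)) := by
      rw [mul_powerSourceDeriv_sub_powerSource hs]
      gcongr
    _ = _ := by
      rw [mul_powerSourceDeriv_sub_powerSource hs, powerSourceDeriv, powerSource, rpow_add hs,
        rpow_one, rpow_sub hs, rpow_one]
      field_simp
      ring

end Power

theorem strict_admissibility_general
    (m a b : ℝ) (hm : 0 < m) (ha : 0 < a) (hb : m ≤ b)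
    (F : ℝ → ℝ) (hF : ∀ s, F s = a * s ^ (1 + 2 / m) - b * s)
    (α : ℝ) (hα : 0 < α)
    (u : ℝ → ℝ)
    (huc : ContinuousOn u (Ici 0))
    (hud : ∀ τ ∈ Ioi (0 : ℝ), DifferentiableAt ℝ u τ)
    (hud' : ∀ τ ∈ Ioi (0 : ℝ), DifferentiableAt ℝ (deriv u) τ)
    (hode : ∀ τ ∈ Ioi (0 : ℝ),
      deriv (deriv u) τ + (Real.cosh τ / Real.sinh τ) * deriv u τ + F (u τ) = 0)
    (hu0 : u 0 = α)
    (hu'0 : Tendsto (deriv u) (nhdsWithin 0 (Ioi 0)) (nhds 0))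
    (w : ℝ → ℝ)
    (hwc : ContinuousOn w (Ici 0))
    (hwd : ∀ τ ∈ Ioi (0 : ℝ), DifferentiableAt ℝ w τ)
    (hwd' : ∀ τ ∈ Ioi (0 : ℝ), DifferentiableAt ℝ (deriv w) τ)
    (hwode : ∀ τ ∈ Ioi (0 : ℝ),
      deriv (deriv w) τ + (Real.cosh τ / Real.sinh τ) * deriv w τ
        + (a * (1 + 2 / m) * u τ ^ (2 / m) - b) * w τ = 0)
    (hw0 : w 0 = 1)
    (hw'0 : Tendsto (deriv w) (nhdsWithin 0 (Ioi 0)) (nhds 0)) :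
    (∀ bα : ℝ, 0 < bα → u bα = 0 → (∀ τ ∈ Ico 0 bα, 0 < u τ) →
        (∃! τ, τ ∈ Ioo 0 bα ∧ w τ = 0) ∧ w bα < 0) ∧
    ((∀ τ ∈ Ioi (0 : ℝ), 0 < u τ) → Tendsto u atTop (nhds 0) →
        (∃! τ, τ ∈ Ioi (0 : ℝ) ∧ w τ = 0) ∧
        ¬ ∃ M : ℝ, ∀ τ ∈ Ioi (0 : ℝ), |w τ| ≤ M) := by
  obtain rfl : F = powerSource (2 / m) a b := funext hF
  have hq : 0 < 2 / m := by positivity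
  have hbq : 2 ≤ b * (2 / m) := by
    rw [mul_div_assoc', le_div_iff₀ hm]
    linarith
  have hf : IsSuperlinear (powerSource (2 / m) a b) _ _ := isSuperlinear_powerSource hq ha
  have hu : IsRadialSolution α u (deriv u) (fun τ => powerSource (2 / m) a b (u τ)) :=
    hu0 ▸ .of_deriv huc hud hud' hode hu'0
  have hw : IsRadialSolution 1 w (deriv w) (fun τ => powerSourceDeriv (2 / m) a b (u τ) * w τ) :=
    hw0 ▸ .of_deriv hwc hwd hwd' hwode hw'0
  have hgap : ∀ {T}, IsDecreasingProfile _ u (deriv u) T → SturmGapChangesSignOnce _ _ u T :=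
    sturmGapChangesSignOnce_of_steep hf (fun s => hasDerivAt_powerSourceDeriv)
      (fun s => powerSource_steep hq ha hbq) hu
  constructor
  · intro B hB huB hupos
    have hprof := IsDecreasingProfile.of_eq_zero hf hu hα hB
      (fun t ht => hupos t (Ioo_subset_Ico_self ht)) huB
    exact existsUnique_zero_and_neg_of_profile_eq_zero hf hu hw one_pos hB hprof huB (hgap hprof)
  · intro hupos hlim
    have hprof : ∀ T > 0, IsDecreasingProfile _ u (deriv u) T := fun T hT =>
      .of_tendsto_zero hf hu hα hT (fun t ht => hupos t ht.1) hlim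
    exact existsUnique_zero_and_not_bounded_of_ground_state hf
      (continuous_powerSourceDeriv hq.le).continuousAt
      (by rw [powerSourceDeriv_zero hq.ne']; linarith) hu hw one_pos hprof hlim
      (fun T hT => hgap (hprof T hT))

/-- Strict admissibility of initial values in `G ∪ N` (Theorem 5.1): assume
`b̃ ≥ m`, let `α ∈ G ∪ N` with solution `u`, and let `w` solve the linearized
equation `w'' + coth(τ)·w' + f'(u)·w = 0` with `w(0) = 1`, `w'(0⁺) = 0`, where
`f'(s) = ã(1+2/m)s^{2/m} − b̃`.  Then `w` has exactly one zero in `(0, b(α))`;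
moreover if `α ∈ N` then `w(b(α)) < 0`, while if `α ∈ G` then `w` is unbounded
on `(0, ∞)`.  The two conjuncts treat the cases `α ∈ N` and `α ∈ G`. -/
theorem strict_admissibility
    (m a b : ℝ) (hm : 2 < m) (ha : 0 < a) (hb : m ≤ b)
    (F : ℝ → ℝ) (hF : ∀ s, F s = a * s ^ (1 + 2 / m) - b * s)
    (α : ℝ) (hα : 0 < α)
    (u : ℝ → ℝ)
    (huc : ContinuousOn u (Ici 0))
    (hud : ∀ τ ∈ Ioi (0 : ℝ), DifferentiableAt ℝ u τ)
    (hud' : ∀ τ ∈ Ioi (0 : ℝ), DifferentiableAt ℝ (deriv u) τ)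
    (hode : ∀ τ ∈ Ioi (0 : ℝ),
      deriv (deriv u) τ + (Real.cosh τ / Real.sinh τ) * deriv u τ + F (u τ) = 0)
    (hu0 : u 0 = α)
    (hu'0 : Tendsto (deriv u) (nhdsWithin 0 (Ioi 0)) (nhds 0))
    (w : ℝ → ℝ)
    (hwc : ContinuousOn w (Ici 0))
    (hwd : ∀ τ ∈ Ioi (0 : ℝ), DifferentiableAt ℝ w τ)
    (hwd' : ∀ τ ∈ Ioi (0 : ℝ), DifferentiableAt ℝ (deriv w) τ)
    (hwode : ∀ τ ∈ Ioi (0 : ℝ),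
      deriv (deriv w) τ + (Real.cosh τ / Real.sinh τ) * deriv w τ
        + (a * (1 + 2 / m) * u τ ^ (2 / m) - b) * w τ = 0)
    (hw0 : w 0 = 1)
    (hw'0 : Tendsto (deriv w) (nhdsWithin 0 (Ioi 0)) (nhds 0)) :
    (∀ bα : ℝ, 0 < bα → u bα = 0 → (∀ τ ∈ Ico 0 bα, 0 < u τ) →
        (∃! τ, τ ∈ Ioo 0 bα ∧ w τ = 0) ∧ w bα < 0) ∧
    ((∀ τ ∈ Ioi (0 : ℝ), 0 < u τ) → Tendsto u atTop (nhds 0) →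
        (∃! τ, τ ∈ Ioi (0 : ℝ) ∧ w τ = 0) ∧
        ¬ ∃ M : ℝ, ∀ τ ∈ Ioi (0 : ℝ), |w τ| ≤ M) :=
  strict_admissibility_general m a b (two_pos.trans hm) ha hb F hF α hα u huc hud hud' hode hu0 hu'0
    w hwc hwd hwd' hwode hw0 hw'0
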